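/- arXiv:2512.11702 — 2 statements merged into one kernel-verified Lean document; each statement's English description precedes it below -/
import Mathlib

section
/- The fixed subalgebra R^G equals the 𝔽₃-subalgebra of R generated by the fourteen elements {a₁, a₂, a₃, b, c₁, c₂, c₃, c₄, c₅, c₆, d₁, d₂, d₃, y₁y₂y₃}. -/
open Matrix MvPolynomial

set_option synthInstance.maxHeartbeats 1000000
set_option maxHeartbeats 1000000

abbrev F3 : Type := ZMod 3
abbrev G3 : Type := Matrix.SpecialLinearGroup (Fin 2) F3
abbrev S3 : Type := MvPolynomial (Fin 3) F3

/-- The fixed basis `v₁, v₂, v₃` of the traceless `2 × 2` matrices over `𝔽₃`. -/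
def V : Fin 3 → Matrix (Fin 2) (Fin 2) F3 :=
  ![!![0, 1; -1, 0], !![-1, -1; -1, 1], !![1, -1; -1, -1]]

/-- Coordinates of a traceless matrix with respect to the basis `v₁, v₂, v₃`. -/
def coordM : Fin 3 → Matrix (Fin 2) (Fin 2) F3 → F3 :=
  ![fun X => X 1 0 - X 0 1, fun X => X 0 0 - X 0 1 - X 1 0, fun X => -(X 0 0 + X 0 1 + X 1 0)]

/-- Matrix of the (dual) action of `g` on `M*`: `g • x_s = ∑ r, (rep g) s r • x_r`, where
`(rep g) s r = x_s (g⁻¹ • v_r) = coordM s (g⁻¹ vᵣ g)`, coming from `(g • f)(v) = f(g⁻¹ • v)`. -/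
def rep (g : G3) : Matrix (Fin 3) (Fin 3) F3 :=
  Matrix.of fun s r => coordM s ((g⁻¹ : G3) * V r * (g : Matrix (Fin 2) (Fin 2) F3))

/-- The action of `g ∈ SL₂(𝔽₃)` on `S = 𝔽₃[x₁,x₂,x₃]` by algebra automorphisms, given by
substituting `x_s ↦ g • x_s = ∑ r, (rep g) s r • x_r`. -/
noncomputable def actS (g : G3) : S3 →ₐ[F3] S3 :=
  MvPolynomial.aeval fun s => ∑ r : Fin 3, rep g s r • MvPolynomial.X r

noncomputable def a1 : S3 := X 0 ^ 2 + X 1 ^ 2 + X 2 ^ 2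
noncomputable def a2 : S3 := X 0 * X 1 * X 2
noncomputable def a3 : S3 := X 0 ^ 4 + X 1 ^ 4 + X 2 ^ 4
noncomputable def bP : S3 := X 0 ^ 4 * X 1 ^ 2 + X 0 ^ 2 * X 2 ^ 4 + X 1 ^ 4 * X 2 ^ 2
noncomputable def av : Fin 3 → S3 := ![a1, a2, a3]

def tm : G3 := ⟨!![1, 1; 0, 1], by decide⟩
def im : G3 := ⟨!![0, 1; -1, 0], by decide⟩
def jm : G3 := ⟨!![1, -1; -1, -1], by decide⟩

/-- The quaternion subgroup `H = ⟨i, j⟩ ≅ Q₈` of `SL₂(𝔽₃)`. -/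
def H3 : Subgroup G3 := Subgroup.closure {im, jm}

/-- The character with `χ(±e) = χ(±i) = 1` and `χ(±j) = χ(±k) = -1` (its values off the
set `{±e, ±i}` are `-1`; only the restriction to `H` is ever used). -/
def chi (g : G3) : F3 :=
  if (g : Matrix (Fin 2) (Fin 2) F3) = 1 ∨ (g : Matrix (Fin 2) (Fin 2) F3) = -1 ∨
     (g : Matrix (Fin 2) (Fin 2) F3) = (im : Matrix (Fin 2) (Fin 2) F3) ∨
     (g : Matrix (Fin 2) (Fin 2) F3) = -(im : Matrix (Fin 2) (Fin 2) F3) then 1 else -1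

/-- The `𝔽₃`-submodule `S^H_χ` of `χ`-relative `H`-invariants in `S`. -/
noncomputable def relInv : Submodule F3 S3 where
  carrier := {f | ∀ h ∈ H3, actS h f = chi h • f}
  add_mem' := by
    intro f g hf hg h hh
    rw [map_add, hf h hh, hg h hh, smul_add]
  zero_mem' := by
    intro h hh
    rw [map_zero, smul_zero]
  smul_mem' := by
    intro c f hf h hh
    rw [_root_.map_smul, hf h hh, smul_comm]

open TensorProduct

/-- The exterior algebra `Λ(M*)` on `y₁, y₂, y₃` (with `M*` in dual-basis coordinates). -/
abbrev Lam : Type := ExteriorAlgebra F3 (Fin 3 → F3)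

/-- `y_s = dx_s`, the exterior generators. -/
noncomputable def yy (s : Fin 3) : Lam := ExteriorAlgebra.ι F3 (Pi.single s 1)

/-- The linear action of `g` on the coordinate space of `y₁, y₂, y₃`:
`y_s ↦ ∑ r, (rep g) s r • y_r`. -/
noncomputable def repL (g : G3) : (Fin 3 → F3) →ₗ[F3] (Fin 3 → F3) :=
  Matrix.toLin' (rep g)ᵀ

/-- The algebra of differential forms `R = S ⊗ Λ(M*)`: the graded-commutative `𝔽₃`-algebra
generated by the central `x₁, x₂, x₃` and the anticommuting `y₁, y₂, y₃`. -/
abbrev Rf : Type := S3 ⊗[F3] Lam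

/-- The action of `g ∈ SL₂(𝔽₃)` on `R` by ring automorphisms, acting on `x`'s as on `S`
and on `y₁, y₂, y₃` by the same matrices as on `x₁, x₂, x₃`. -/
noncomputable def actR (g : G3) : Rf →ₐ[F3] Rf :=
  Algebra.TensorProduct.map (actS g) (ExteriorAlgebra.map (repL g))

noncomputable def c1 : Rf := X 0 ⊗ₜ[F3] yy 0 + X 1 ⊗ₜ[F3] yy 1 + X 2 ⊗ₜ[F3] yy 2
noncomputable def c2 : Rf :=
  (X 1 * X 2) ⊗ₜ[F3] yy 0 + (X 2 * X 0) ⊗ₜ[F3] yy 1 + (X 0 * X 1) ⊗ₜ[F3] yy 2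
noncomputable def c3 : Rf :=
  (X 0 ^ 3) ⊗ₜ[F3] yy 0 + (X 1 ^ 3) ⊗ₜ[F3] yy 1 + (X 2 ^ 3) ⊗ₜ[F3] yy 2
noncomputable def c4 : Rf :=
  (X 0 * X 1 ^ 2) ⊗ₜ[F3] yy 0 + (X 1 * X 2 ^ 2) ⊗ₜ[F3] yy 1 + (X 2 * X 0 ^ 2) ⊗ₜ[F3] yy 2
noncomputable def c5 : Rf :=
  (X 1 ^ 3 * X 2) ⊗ₜ[F3] yy 0 + (X 2 ^ 3 * X 0) ⊗ₜ[F3] yy 1 + (X 0 ^ 3 * X 1) ⊗ₜ[F3] yy 2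
noncomputable def c6 : Rf :=
  (X 0 ^ 3 * X 1 ^ 2) ⊗ₜ[F3] yy 0 + (X 1 ^ 3 * X 2 ^ 2) ⊗ₜ[F3] yy 1 +
    (X 2 ^ 3 * X 0 ^ 2) ⊗ₜ[F3] yy 2

noncomputable def d1 : Rf :=
  X 0 ⊗ₜ[F3] (yy 1 * yy 2) + X 1 ⊗ₜ[F3] (yy 2 * yy 0) + X 2 ⊗ₜ[F3] (yy 0 * yy 1)
noncomputable def d2 : Rf :=
  (X 1 * X 2) ⊗ₜ[F3] (yy 1 * yy 2) + (X 2 * X 0) ⊗ₜ[F3] (yy 2 * yy 0) +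
    (X 0 * X 1) ⊗ₜ[F3] (yy 0 * yy 1)
noncomputable def d3 : Rf :=
  (X 0 ^ 3) ⊗ₜ[F3] (yy 1 * yy 2) + (X 1 ^ 3) ⊗ₜ[F3] (yy 2 * yy 0) +
    (X 2 ^ 3) ⊗ₜ[F3] (yy 0 * yy 1)
noncomputable def d4 : Rf :=
  (X 0 * X 1 ^ 2) ⊗ₜ[F3] (yy 1 * yy 2) + (X 1 * X 2 ^ 2) ⊗ₜ[F3] (yy 2 * yy 0) +
    (X 2 * X 0 ^ 2) ⊗ₜ[F3] (yy 0 * yy 1)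
noncomputable def d5 : Rf :=
  (X 1 ^ 3 * X 2) ⊗ₜ[F3] (yy 1 * yy 2) + (X 2 ^ 3 * X 0) ⊗ₜ[F3] (yy 2 * yy 0) +
    (X 0 ^ 3 * X 1) ⊗ₜ[F3] (yy 0 * yy 1)
noncomputable def d6 : Rf :=
  (X 0 ^ 3 * X 1 ^ 2) ⊗ₜ[F3] (yy 1 * yy 2) + (X 1 ^ 3 * X 2 ^ 2) ⊗ₜ[F3] (yy 2 * yy 0) +
    (X 2 ^ 3 * X 0 ^ 2) ⊗ₜ[F3] (yy 0 * yy 1)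

/-- The top form `y₁y₂y₃`. -/
noncomputable def y123 : Lam := yy 0 * yy 1 * yy 2

/-- The fixed subalgebra `R^G`. -/
noncomputable def RG : Subalgebra F3 Rf where
  carrier := {z | ∀ g : G3, actR g z = z}
  add_mem' := fun ha hb g => by rw [map_add, ha g, hb g]
  mul_mem' := fun ha hb g => by rw [_root_.map_mul, ha g, hb g]
  algebraMap_mem' := fun r g => by rw [AlgHom.commutes]

/-- The fourteen generators `a₁, a₂, a₃, b, c₁, …, c₆, d₁, d₂, d₃, y₁y₂y₃`,
viewed as elements of `R`. -/
noncomputable def gens : Fin 14 → Rf :=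
  ![a1 ⊗ₜ[F3] (1 : Lam), a2 ⊗ₜ[F3] (1 : Lam), a3 ⊗ₜ[F3] (1 : Lam), bP ⊗ₜ[F3] (1 : Lam),
    c1, c2, c3, c4, c5, c6, d1, d2, d3, (1 : S3) ⊗ₜ[F3] y123]

/-! ### The action through `im`, `jm` and `tm` -/

theorem rep_im : rep im = !![1, 0, 0; 0, -1, 0; 0, 0, -1] := by decide +kernel
theorem rep_jm : rep jm = !![-1, 0, 0; 0, -1, 0; 0, 0, 1] := by decide +kernel
theorem rep_tm : rep tm = !![0, 1, 0; 0, 0, 1; 1, 0, 0] := by decide +kernel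

theorem exists_rep_eq (g : G3) : ∃ a b : Fin 2, ∃ c : Fin 3,
    rep g = rep im ^ (a : ℕ) * rep jm ^ (b : ℕ) * rep tm ^ (c : ℕ) := by
  revert g
  decide +kernel

theorem actS_im_eq : actS im = aeval fun s => (![1, -1, -1] s : F3) • (X s : S3) := by
  refine MvPolynomial.algHom_ext fun s => ?_
  fin_cases s <;> simp [actS, rep_im, Fin.sum_univ_three]

theorem actS_jm_eq : actS jm = aeval fun s => (![-1, -1, 1] s : F3) • (X s : S3) := by
  refine MvPolynomial.algHom_ext fun s => ?_
  fin_cases s <;> simp [actS, rep_jm, Fin.sum_univ_three]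

theorem actS_tm_eq : actS tm = rename (finRotate 3) := by
  refine MvPolynomial.algHom_ext fun s => ?_
  fin_cases s <;> simp [actS, rep_tm, Fin.sum_univ_three, rename_X]

theorem coeff_aeval_smul_X (ε : Fin 3 → F3) (f : S3) (n : Fin 3 →₀ ℕ) :
    coeff n (aeval (fun s => ε s • (X s : S3)) f) = (∏ s, ε s ^ n s) * coeff n f := by
  classical
  induction f using MvPolynomial.induction_on' with
  | monomial m c =>
    have h : aeval (fun s => ε s • (X s : S3)) (monomial m c) =
        monomial m ((∏ s, ε s ^ m s) * c) := by
      rw [aeval_monomial, monomial_eq, Finsupp.prod_fintype _ _ (by simp),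
        Finsupp.prod_fintype _ _ (by simp)]
      simp only [algebraMap_eq, smul_eq_C_mul, mul_pow, Finset.prod_mul_distrib, map_mul,
        map_prod, map_pow]
      ring
    rw [h, coeff_monomial, coeff_monomial]
    split_ifs with hm
    · rw [hm]
    · simp
  | add p q hp hq => rw [map_add, coeff_add, coeff_add, hp, hq, mul_add]

theorem neg_one_pow_mul_eq {k : ℕ} {c : F3} (hc : c ≠ 0) (h : (-1) ^ k * c = c) : Even k := by
  by_contra hk
  rw [(Nat.not_even_iff_odd.1 hk).neg_one_pow] at h
  revert c; decide

theorem neg_one_pow_mul_eq_neg {k : ℕ} {c : F3} (hc : c ≠ 0) (h : (-1) ^ k * c = -c) :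
    Odd k := by
  by_contra hk
  rw [(Nat.not_odd_iff_even.1 hk).neg_one_pow] at h
  revert c; decide

theorem coeff_actS_im (f : S3) (n : Fin 3 →₀ ℕ) :
    coeff n (actS im f) = (-1) ^ (n 1 + n 2) * coeff n f := by
  rw [actS_im_eq, coeff_aeval_smul_X, Fin.prod_univ_three]
  simp [pow_add]

theorem coeff_actS_jm (f : S3) (n : Fin 3 →₀ ℕ) :
    coeff n (actS jm f) = (-1) ^ (n 0 + n 1) * coeff n f := by
  rw [actS_jm_eq, coeff_aeval_smul_X, Fin.prod_univ_three]
  simp [pow_add]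

theorem coeff_actS_tm (f : S3) (n : Fin 3 →₀ ℕ) :
    coeff n (actS tm f) = coeff (n.mapDomain (finRotate 3).symm) f := by
  rw [actS_tm_eq, ← coeff_rename_mapDomain (finRotate 3) (finRotate 3).injective f,
    ← Finsupp.mapDomain_comp]
  simp

/-! ### Module generators over the invariants `a₁, a₂, a₃` -/

theorem three_eq_zero : (3 : S3) = 0 := CharP.cast_eq_zero S3 3

/-- The subalgebra generated by the primary invariants `a₁, a₂, a₃`. -/
noncomputable def primaryInv : Subalgebra F3 S3 := Algebra.adjoin F3 {a1, a2, a3}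

/-- `a₁` as an element of `primaryInv`. -/
noncomputable def A1 : primaryInv := ⟨a1, Algebra.subset_adjoin (by simp)⟩

/-- `a₂` as an element of `primaryInv`. -/
noncomputable def A2 : primaryInv := ⟨a2, Algebra.subset_adjoin (by simp)⟩

/-- `a₃` as an element of `primaryInv`. -/
noncomputable def A3 : primaryInv := ⟨a3, Algebra.subset_adjoin (by simp)⟩

/-- Module generators of the `χ`-relative invariants of the diagonal subgroup. -/
noncomputable def relGen : Fin 6 → S3 :=
  ![X 0, X 1 * X 2, X 0 ^ 3, X 0 * X 1 ^ 2, X 1 ^ 3 * X 2, X 0 ^ 3 * X 1 ^ 2]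

/-- Module generators of the invariants of the diagonal subgroup. -/
noncomputable def invGen : Fin 6 → S3 :=
  ![1, X 0 ^ 2, X 1 ^ 2, X 0 ^ 2 * X 1 ^ 2, X 0 ^ 4, X 0 ^ 4 * X 1 ^ 2]

theorem sq_X0_mul_relGen (i : Fin 6) : X 0 ^ 2 * relGen i =
    ∑ j, (!![0, 0, 1, 0, 0, 0;
        A2, 0, 0, 0, 0, 0;
        A1 ^ 2 - A3, A2, A1, 0, 0, 0;
        0, 0, 0, 0, 0, 1;
        0, 0, 0, A2, 0, 0;
        0, 0, 0, A1 ^ 2 - A3, A2, A1] : Matrix (Fin 6) (Fin 6) primaryInv) i j • relGen j := by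
  fin_cases i <;> simp [Fin.sum_univ_six, relGen, Subalgebra.smul_def, A1, A2, A3, a1, a2, a3]
  · ring
  · ring
  · linear_combination (-X 0 ^ 3 * X 1 ^ 2 - X 0 ^ 3 * X 2 ^ 2 - X 0 * X 1 ^ 2 * X 2 ^ 2) * three_eq_zero
  · ring
  · ring
  · linear_combination (-X 0 ^ 3 * X 1 ^ 4 - X 0 ^ 3 * X 1 ^ 2 * X 2 ^ 2 - X 0 * X 1 ^ 4 * X 2 ^ 2) * three_eq_zero

theorem sq_X1_mul_relGen (i : Fin 6) : X 1 ^ 2 * relGen i =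
    ∑ j, (!![0, 0, 0, 1, 0, 0;
        0, 0, 0, 0, 1, 0;
        0, 0, 0, 0, 0, 1;
        0, -A2, 0, A1, 0, -1;
        A1 * A2, A1 ^ 2 - A3, -A2, -A2, A1, 0;
        -A2 ^ 2, 0, 0, -A1 ^ 2 + A3, -A2, 0] : Matrix (Fin 6) (Fin 6) primaryInv) i j • relGen j := by
  fin_cases i <;> simp [Fin.sum_univ_six, relGen, Subalgebra.smul_def, A1, A2, A3, a1, a2, a3]
  · ring
  · ring
  · ring
  · ring
  · linear_combination (-X 0 ^ 2 * X 1 ^ 3 * X 2 - X 0 ^ 2 * X 1 * X 2 ^ 3 - X 1 ^ 3 * X 2 ^ 3) * three_eq_zero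
  · linear_combination (X 0 ^ 3 * X 1 ^ 4 + X 0 ^ 3 * X 1 ^ 2 * X 2 ^ 2 + X 0 * X 1 ^ 4 * X 2 ^ 2) * three_eq_zero

theorem sq_X0_mul_invGen (i : Fin 6) : X 0 ^ 2 * invGen i =
    ∑ j, (!![0, 1, 0, 0, 0, 0;
        0, 0, 0, 0, 1, 0;
        0, 0, 0, 1, 0, 0;
        0, 0, 0, 0, 0, 1;
        A2 ^ 2, A1 ^ 2 - A3, 0, 0, A1, 0;
        0, 0, A2 ^ 2, A1 ^ 2 - A3, 0, A1] : Matrix (Fin 6) (Fin 6) primaryInv) i j • invGen j := by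
  fin_cases i <;> simp [Fin.sum_univ_six, invGen, Subalgebra.smul_def, A1, A2, A3, a1, a2, a3]
  · ring
  · ring
  · linear_combination (-X 0 ^ 4 * X 1 ^ 2 - X 0 ^ 4 * X 2 ^ 2 - X 0 ^ 2 * X 1 ^ 2 * X 2 ^ 2) * three_eq_zero
  · linear_combination (-X 0 ^ 4 * X 1 ^ 4 - X 0 ^ 4 * X 1 ^ 2 * X 2 ^ 2 - X 0 ^ 2 * X 1 ^ 4 * X 2 ^ 2) * three_eq_zero

theorem sq_X1_mul_invGen (i : Fin 6) : X 1 ^ 2 * invGen i =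
    ∑ j, (!![0, 0, 1, 0, 0, 0;
        0, 0, 0, 1, 0, 0;
        A1 ^ 2 - A3, A1, A1, -1, -1, 0;
        -A2 ^ 2, 0, 0, A1, 0, -1;
        0, 0, 0, 0, 0, 1;
        0, -A2 ^ 2, -A2 ^ 2, -A1 ^ 2 + A3, 0, 0] : Matrix (Fin 6) (Fin 6) primaryInv) i j • invGen j := by
  fin_cases i <;> simp [Fin.sum_univ_six, invGen, Subalgebra.smul_def, A1, A2, A3, a1, a2, a3]
  · ring
  · linear_combination (-X 0 ^ 2 * X 1 ^ 2 - X 0 ^ 2 * X 2 ^ 2 - X 1 ^ 2 * X 2 ^ 2) * three_eq_zero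
  · ring
  · ring
  · linear_combination (X 0 ^ 4 * X 1 ^ 4 + X 0 ^ 4 * X 1 ^ 2 * X 2 ^ 2 + X 0 ^ 2 * X 1 ^ 4 * X 2 ^ 2) * three_eq_zero


theorem mul_mem_span_of_eq_sum {g : Fin 6 → S3} {p : S3}
    {T : Matrix (Fin 6) (Fin 6) primaryInv} (h : ∀ i, p * g i = ∑ j, T i j • g j) {f : S3}
    (hf : f ∈ Submodule.span primaryInv (Set.range g)) :
    p * f ∈ Submodule.span primaryInv (Set.range g) := by
  induction hf using Submodule.span_induction with
  | mem f hf =>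
    obtain ⟨i, rfl⟩ := hf
    rw [h]
    exact sum_mem fun j _ => Submodule.smul_mem _ _ (Submodule.subset_span ⟨j, rfl⟩)
  | zero => simp
  | add f g _ _ hf hg => rw [mul_add]; exact add_mem hf hg
  | smul a f _ hf => rw [mul_smul_comm]; exact Submodule.smul_mem _ a hf

/-- A `primaryInv`-submodule stable under `x₁²` and `x₂²` is stable under `x₃²`, hence under
every monomial with even exponents. -/
theorem even_monomial_mul_mem {N : Submodule primaryInv S3}
    (h0 : ∀ f ∈ N, X 0 ^ 2 * f ∈ N) (h1 : ∀ f ∈ N, X 1 ^ 2 * f ∈ N) (i j k : ℕ) (f : S3)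
    (hf : f ∈ N) : X 0 ^ (2 * i) * X 1 ^ (2 * j) * X 2 ^ (2 * k) * f ∈ N := by
  have h2 : ∀ f ∈ N, X 2 ^ 2 * f ∈ N := fun f hf => by
    have : X 2 ^ 2 * f = A1 • f - X 0 ^ 2 * f - X 1 ^ 2 * f := by
      simp only [Subalgebra.smul_def, A1, a1, smul_eq_mul]
      ring
    rw [this]
    exact sub_mem (sub_mem (N.smul_mem _ hf) (h0 f hf)) (h1 f hf)
  have hpow : ∀ p : S3, (∀ f ∈ N, p ^ 2 * f ∈ N) → ∀ m : ℕ, ∀ f ∈ N, p ^ (2 * m) * f ∈ N := by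
    intro p hp m
    induction m with
    | zero => simp
    | succ m ih =>
      intro f hf
      rw [mul_add, pow_add, mul_assoc]
      exact ih _ (hp f hf)
  rw [mul_assoc, mul_assoc]
  exact hpow _ h0 i _ (hpow _ h1 j _ (hpow _ h2 k _ hf))

theorem monomial_mem_of_prod_mem {N : Submodule primaryInv S3} {n : Fin 3 →₀ ℕ}
    (h : X 0 ^ n 0 * X 1 ^ n 1 * X 2 ^ n 2 ∈ N) (c : F3) : monomial n c ∈ N := by
  have : monomial n c = c • (X 0 ^ n 0 * X 1 ^ n 1 * X 2 ^ n 2 : S3) := by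
    rw [monomial_eq, Finsupp.prod_fintype _ _ (by simp), Fin.prod_univ_three, smul_eq_C_mul]
  rw [this, ← algebraMap_smul primaryInv c]
  exact N.smul_mem _ h

theorem mem_span_relGen {f : S3} (him : actS im f = f) (hjm : actS jm f = -f) :
    f ∈ Submodule.span primaryInv (Set.range relGen) := by
  set N := Submodule.span primaryInv (Set.range relGen)
  rw [f.as_sum]
  refine sum_mem fun n hn => monomial_mem_of_prod_mem ?_ _
  have hc : coeff n f ≠ 0 := mem_support_iff.1 hn
  have e1 : Even (n 1 + n 2) := neg_one_pow_mul_eq hc (by rw [← coeff_actS_im, him])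
  have e2 : Odd (n 0 + n 1) := neg_one_pow_mul_eq_neg hc (by rw [← coeff_actS_jm, hjm, coeff_neg])
  have key := even_monomial_mul_mem (N := N) (fun f => mul_mem_span_of_eq_sum sq_X0_mul_relGen)
    (fun f => mul_mem_span_of_eq_sum sq_X1_mul_relGen) (n 0 / 2) (n 1 / 2) (n 2 / 2)
  obtain h | h := Nat.even_or_odd (n 1)
  · convert key (X 0) (Submodule.subset_span ⟨0, rfl⟩) using 1
    obtain ⟨i, hi⟩ : Odd (n 0) := by grind
    obtain ⟨j, hj⟩ := h
    obtain ⟨k, hk⟩ : Even (n 2) := by grind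
    rw [show n 0 / 2 = i by lia, show n 1 / 2 = j by lia, show n 2 / 2 = k by lia, hi, hj, hk]
    ring
  · convert key (X 1 * X 2) (Submodule.subset_span ⟨1, rfl⟩) using 1
    obtain ⟨i, hi⟩ : Even (n 0) := by grind
    obtain ⟨j, hj⟩ := h
    obtain ⟨k, hk⟩ : Odd (n 2) := by grind
    rw [show n 0 / 2 = i by lia, show n 1 / 2 = j by lia, show n 2 / 2 = k by lia, hi, hj, hk]
    ring

theorem monomial_mem_span_invGen {n : Fin 3 →₀ ℕ} (e1 : Even (n 1 + n 2))
    (e2 : Even (n 0 + n 1)) (c : F3) :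
    monomial n c ∈ Submodule.span primaryInv (Set.range invGen) := by
  set N := Submodule.span primaryInv (Set.range invGen)
  refine monomial_mem_of_prod_mem ?_ _
  have h1 : (1 : S3) ∈ N := Submodule.subset_span ⟨0, rfl⟩
  have key := even_monomial_mul_mem (N := N) (fun f => mul_mem_span_of_eq_sum sq_X0_mul_invGen)
    (fun f => mul_mem_span_of_eq_sum sq_X1_mul_invGen) (n 0 / 2) (n 1 / 2) (n 2 / 2)
  obtain h | h := Nat.even_or_odd (n 1)
  · convert key 1 h1 using 1
    obtain ⟨i, hi⟩ : Even (n 0) := by grind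
    obtain ⟨j, hj⟩ := h
    obtain ⟨k, hk⟩ : Even (n 2) := by grind
    rw [show n 0 / 2 = i by lia, show n 1 / 2 = j by lia, show n 2 / 2 = k by lia, hi, hj, hk]
    ring
  · convert key _ (N.smul_mem A2 h1) using 1
    obtain ⟨i, hi⟩ : Odd (n 0) := by grind
    obtain ⟨j, hj⟩ := h
    obtain ⟨k, hk⟩ : Odd (n 2) := by grind
    rw [show n 0 / 2 = i by lia, show n 1 / 2 = j by lia, show n 2 / 2 = k by lia, hi, hj, hk]
    simp only [Subalgebra.smul_def, A2, a2, smul_eq_mul]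
    ring

/-! ### Invariants of the cyclic permutation -/

theorem actS_tm_X (s : Fin 3) : actS tm (X s) = X (s + 1) := by
  rw [actS_tm_eq, rename_X, finRotate_apply]

theorem actS_tm_of_mem_primaryInv {a : S3} (ha : a ∈ primaryInv) : actS tm a = a := by
  have h : primaryInv ≤ AlgHom.equalizer (actS tm) (AlgHom.id F3 S3) := by
    refine Algebra.adjoin_le ?_
    rintro _ (rfl | rfl | rfl) <;>
      simp only [SetLike.mem_coe, AlgHom.mem_equalizer, a1, a2, a3, map_add, map_mul, map_pow,
        actS_tm_X, AlgHom.id_apply, Fin.isValue, Fin.reduceAdd] <;> ring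
  exact h ha

/-- The part of a polynomial supported on the exponents satisfying `P`. -/
noncomputable def supportPart (P : (Fin 3 →₀ ℕ) → Prop) [DecidablePred P] (f : S3) : S3 :=
  ∑ n ∈ f.support with P n, monomial n (coeff n f)

theorem coeff_supportPart (P : (Fin 3 →₀ ℕ) → Prop) [DecidablePred P] (f : S3)
    (n : Fin 3 →₀ ℕ) : coeff n (supportPart P f) = if P n then coeff n f else 0 := by
  classical
  simp only [supportPart, coeff_sum, coeff_monomial, Finset.sum_ite_eq', Finset.mem_filter,
    mem_support_iff]
  grind

theorem mapDomain_finRotate_symm_apply (n : Fin 3 →₀ ℕ) (s : Fin 3) :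
    n.mapDomain (finRotate 3).symm s = n (s + 1) := by
  rw [Finsupp.mapDomain_equiv_apply, Equiv.symm_symm, finRotate_apply]

/-- A cyclically invariant polynomial is the sum of its part with constant exponents and of the
trace of the part supported on a set of representatives of the other orbits of exponents. -/
theorem eq_supportPart_add_trace {f : S3} (h : actS tm f = f) :
    f = supportPart (fun n => n 0 = n 1 ∧ n 1 = n 2) f +
      (supportPart (fun n => n 0 < n 1 ∧ n 0 ≤ n 2) f +
        actS tm (supportPart (fun n => n 0 < n 1 ∧ n 0 ≤ n 2) f) +
        actS tm (actS tm (supportPart (fun n => n 0 < n 1 ∧ n 0 ≤ n 2) f))) := by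
  ext n
  have h1 : coeff (n.mapDomain (finRotate 3).symm) f = coeff n f := by rw [← coeff_actS_tm, h]
  have h2 : coeff ((n.mapDomain (finRotate 3).symm).mapDomain (finRotate 3).symm) f =
      coeff n f := by
    rw [← coeff_actS_tm, h, h1]
  simp only [coeff_add, coeff_actS_tm, coeff_supportPart, mapDomain_finRotate_symm_apply, h1,
    h2, Fin.isValue, Fin.reduceAdd]
  split_ifs <;> first | lia | simp

/-- The invariants of `S` lie in the subalgebra generated by `a₁, a₂, a₃, b`. -/
theorem mem_adjoin_of_invariant {f : S3} (him : actS im f = f) (hjm : actS jm f = f)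
    (htm : actS tm f = f) : f ∈ Algebra.adjoin F3 {a1, a2, a3, bP} := by
  set B := Algebra.adjoin F3 {a1, a2, a3, bP}
  have hA : primaryInv ≤ B := Algebra.adjoin_mono (by grind)
  rw [eq_supportPart_add_trace htm]
  refine add_mem (sum_mem fun n hn => hA ?_) ?_
  · obtain ⟨h01, h12⟩ := (Finset.mem_filter.1 hn).2
    have : monomial n (coeff n f) = coeff n f • a2 ^ n 0 := by
      rw [monomial_eq, Finsupp.prod_fintype _ _ (by simp), Fin.prod_univ_three, smul_eq_C_mul, a2,
        ← h12, ← h01, mul_pow, mul_pow]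
    rw [this]
    exact Subalgebra.smul_mem _ (pow_mem A2.2 _) _
  · have hg : supportPart (fun n => n 0 < n 1 ∧ n 0 ≤ n 2) f ∈
        Submodule.span primaryInv (Set.range invGen) := by
      refine sum_mem fun n hn => monomial_mem_span_invGen ?_ ?_ _
      · have hc := mem_support_iff.1 (Finset.mem_filter.1 hn).1
        exact neg_one_pow_mul_eq hc (by rw [← coeff_actS_im, him])
      · have hc := mem_support_iff.1 (Finset.mem_filter.1 hn).1
        exact neg_one_pow_mul_eq hc (by rw [← coeff_actS_jm, hjm])
    generalize supportPart (fun n => n 0 < n 1 ∧ n 0 ≤ n 2) f = g at hg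
    induction hg using Submodule.span_induction with
    | mem g hg =>
      obtain ⟨i, rfl⟩ := hg
      have m1 : a1 ∈ B := hA A1.2
      have m3 : a3 ∈ B := hA A3.2
      have mb : bP ∈ B := Algebra.subset_adjoin (by simp)
      fin_cases i <;> simp [invGen, actS_tm_X]
      · convert zero_mem B using 1
        linear_combination three_eq_zero
      · exact m1
      · convert m1 using 1
        simp only [a1]
        ring
      · convert sub_mem m3 (pow_mem m1 2) using 1
        simp only [a1, a3]
        linear_combination (X 0 ^ 2 * X 1 ^ 2 + X 1 ^ 2 * X 2 ^ 2 + X 2 ^ 2 * X 0 ^ 2) *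
          three_eq_zero
      · exact m3
      · convert mb using 1
        simp only [bP]
        ring
    | zero => simp
    | add g h _ _ hg hh =>
      convert add_mem hg hh using 1
      simp only [map_add]
      ring
    | smul a g _ hg =>
      convert mul_mem (hA a.2) hg using 1
      simp only [Subalgebra.smul_def, smul_eq_mul, map_mul, actS_tm_of_mem_primaryInv a.2]
      ring

/-! ### Coordinates of differential forms -/

theorem yy_mul_self (s : Fin 3) : yy s * yy s = 0 := ExteriorAlgebra.ι_sq_zero _

theorem yy_mul_yy_swap (s r : Fin 3) : yy s * yy r = -(yy r * yy s) :=
  eq_neg_of_add_eq_zero_left (ExteriorAlgebra.ι_add_mul_swap _ _)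

theorem yy_mul_yy_mul_self (s r : Fin 3) : yy s * (yy r * yy s) = 0 := by
  rw [yy_mul_yy_swap r s, mul_neg, ← mul_assoc, yy_mul_self, zero_mul, neg_zero]

theorem yy_mul_self_mul (s : Fin 3) (u : Lam) : yy s * (yy s * u) = 0 := by
  rw [← mul_assoc, yy_mul_self, zero_mul]

theorem y123_eq (s : Fin 3) : yy s * (yy (s + 1) * yy (s + 2)) = y123 := by
  have h : ∀ s r q : Fin 3, yy s * (yy r * yy q) = yy r * (yy q * yy s) := fun s r q => by
    rw [yy_mul_yy_swap q s, ← mul_assoc, yy_mul_yy_swap s r, neg_mul, mul_neg, mul_assoc]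
  fin_cases s
  · simp [y123, mul_assoc]
  · simpa [y123, mul_assoc] using (h 0 1 2).symm
  · simpa [y123, mul_assoc] using h 2 0 1

theorem yy_mul_y123 (s : Fin 3) : yy s * y123 = 0 := by
  rw [← y123_eq s, yy_mul_self_mul]

/-- The monomials in `y₁, y₂, y₃`, which form a basis of `Λ(M*)`. -/
noncomputable def lamVec : Fin 8 → Lam :=
  ![1, yy 0, yy 1, yy 2, yy 1 * yy 2, yy 2 * yy 0, yy 0 * yy 1, y123]

theorem yy_mul_lamVec_mem (s : Fin 3) (i : Fin 8) :
    yy s * lamVec i ∈ Submodule.span F3 (Set.range lamVec) := by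
  have h0 := y123_eq 0
  have h1 := y123_eq 1
  have h2 := y123_eq 2
  simp only [Fin.isValue, Fin.reduceAdd] at h0 h1 h2
  fin_cases s <;> fin_cases i <;>
    simp [lamVec, yy_mul_self, yy_mul_yy_mul_self, yy_mul_self_mul, yy_mul_y123, h0, h1, h2]
  all_goals first
    | (refine Submodule.subset_span ?_; simp; done)
    | (rw [← neg_mem_iff, ← yy_mul_yy_swap]; refine Submodule.subset_span ?_; simp)

theorem span_lamVec : Submodule.span F3 (Set.range lamVec) = ⊤ := by
  rw [eq_top_iff]
  intro x _
  induction x using CliffordAlgebra.left_induction with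
  | algebraMap r =>
    rw [Algebra.algebraMap_eq_smul_one]
    exact Submodule.smul_mem _ _ (Submodule.subset_span ⟨0, rfl⟩)
  | add x y hx hy => exact add_mem (hx trivial) (hy trivial)
  | ι_mul x m hx =>
    have hm : CliffordAlgebra.ι (0 : QuadraticForm F3 (Fin 3 → F3)) m = ∑ s, m s • yy s := by
      simp only [yy, ExteriorAlgebra.ι, ← map_smul, ← map_sum]
      congr 1
      ext s
      simp [Finset.sum_apply, Pi.single_apply]
    rw [hm, Finset.sum_mul]
    refine sum_mem fun s _ => ?_
    rw [smul_mul_assoc]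
    refine Submodule.smul_mem _ _ ?_
    have hx := hx trivial
    revert hx
    generalize x = u
    intro hu
    induction hu using Submodule.span_induction with
    | mem u hu => obtain ⟨i, rfl⟩ := hu; exact yy_mul_lamVec_mem s i
    | zero => simp
    | add u v _ _ hu hv => rw [mul_add]; exact add_mem hu hv
    | smul c u _ hu => rw [mul_smul_comm]; exact Submodule.smul_mem _ c hu

/-- The basis `lamVec` of `Λ(M*)`. -/
noncomputable def lamBasis : Module.Basis (Fin 8) F3 Lam :=
  basisOfTopLeSpanOfCardEqFinrank lamVec span_lamVec.ge (by
    rw [Module.finrank_eq_card_basis (Pi.basisFun F3 (Fin 3)).ExteriorAlgebra]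
    decide)

theorem lamBasis_apply (i : Fin 8) : lamBasis i = lamVec i := by
  rw [lamBasis, coe_basisOfTopLeSpanOfCardEqFinrank]

/-- The form with coordinates `f` with respect to `lamVec`. -/
noncomputable def formOf (f : Fin 8 → S3) : Rf := ∑ i, f i ⊗ₜ[F3] lamVec i

theorem formOf_eq_equivFun_symm (f : Fin 8 → S3) :
    formOf f = (lamBasis.baseChange S3).equivFun.symm f := by
  simp [formOf, lamBasis_apply, Module.Basis.equivFun_symm_apply, TensorProduct.smul_tmul']

theorem formOf_injective : Function.Injective formOf := by
  rw [funext formOf_eq_equivFun_symm]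
  exact (lamBasis.baseChange S3).equivFun.symm.injective

theorem exists_formOf_eq (z : Rf) : ∃ f, formOf f = z := by
  obtain ⟨f, hf⟩ := (lamBasis.baseChange S3).equivFun.symm.surjective z
  exact ⟨f, by rw [formOf_eq_equivFun_symm, hf]⟩

theorem map_repL_yy (g : G3) (s : Fin 3) :
    ExteriorAlgebra.map (repL g) (yy s) = ∑ r, rep g s r • yy r := by
  rw [yy, ExteriorAlgebra.map_apply_ι]
  simp only [yy, ← map_smul, ← map_sum]
  congr 1
  ext r
  simp [repL, Finset.sum_apply, Pi.single_apply]

theorem actR_im_formOf (f : Fin 8 → S3) : actR im (formOf f) =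
    formOf fun i => (![1, 1, -1, -1, 1, -1, -1, 1] i : F3) • actS im (f i) := by
  simp [formOf, actR, Fin.sum_univ_eight, lamVec, y123, map_repL_yy,
    Fin.sum_univ_three, rep_im, tmul_neg, neg_tmul]

theorem actR_jm_formOf (f : Fin 8 → S3) : actR jm (formOf f) =
    formOf fun i => (![1, -1, -1, 1, -1, -1, 1, 1] i : F3) • actS jm (f i) := by
  simp [formOf, actR, Fin.sum_univ_eight, lamVec, y123, map_repL_yy,
    Fin.sum_univ_three, rep_jm, tmul_neg, neg_tmul]

theorem actR_tm_formOf (f : Fin 8 → S3) : actR tm (formOf f) =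
    formOf fun i => actS tm (f (![0, 3, 1, 2, 6, 4, 5, 7] i)) := by
  have h1 : yy 1 * yy 2 * yy 0 = y123 := by simpa [mul_assoc] using y123_eq 1
  simp [formOf, actR, Fin.sum_univ_eight, lamVec, y123, map_repL_yy,
    Fin.sum_univ_three, rep_tm, h1]
  abel

/-! ### From three group elements to the whole group -/

/-- The endomorphism of `R` induced by a linear substitution of the variables. -/
noncomputable def substR (M : Matrix (Fin 3) (Fin 3) F3) : Rf →ₐ[F3] Rf :=
  Algebra.TensorProduct.map (aeval fun s => ∑ r : Fin 3, M s r • (X r : S3))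
    (ExteriorAlgebra.map (Matrix.toLin' Mᵀ))

theorem substR_rep (g : G3) : substR (rep g) = actR g := rfl

theorem substR_one : substR 1 = AlgHom.id F3 Rf := by
  have h : (aeval fun s => ∑ r : Fin 3, (1 : Matrix (Fin 3) (Fin 3) F3) s r • (X r : S3)) =
      AlgHom.id F3 S3 := by
    refine MvPolynomial.algHom_ext fun s => ?_
    simp [Matrix.one_apply]
  rw [substR, h, Matrix.transpose_one, Matrix.toLin'_one, ExteriorAlgebra.map_id,
    Algebra.TensorProduct.map_id]

theorem substR_mul (M N : Matrix (Fin 3) (Fin 3) F3) :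
    substR (M * N) = (substR N).comp (substR M) := by
  have h : (aeval fun s => ∑ r : Fin 3, (M * N) s r • (X r : S3)) =
      (aeval fun s => ∑ r : Fin 3, N s r • (X r : S3)).comp
        (aeval fun s => ∑ r : Fin 3, M s r • (X r : S3)) := by
    refine MvPolynomial.algHom_ext fun s => ?_
    simp only [aeval_X, AlgHom.comp_apply, map_sum, map_smul, Matrix.mul_apply, Finset.sum_smul,
      Finset.smul_sum, mul_smul]
    exact Finset.sum_comm
  rw [substR, substR, substR, ← Algebra.TensorProduct.map_comp, h, Matrix.transpose_mul,
    Matrix.toLin'_mul, ExteriorAlgebra.map_comp_map]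

theorem substR_pow_apply {M : Matrix (Fin 3) (Fin 3) F3} {z : Rf} (h : substR M z = z) (k : ℕ) :
    substR (M ^ k) z = z := by
  induction k with
  | zero => rw [pow_zero, substR_one, AlgHom.id_apply]
  | succ k ih => rw [pow_succ, substR_mul, AlgHom.comp_apply, ih, h]

theorem mem_RG_iff {z : Rf} : z ∈ RG ↔ actR im z = z ∧ actR jm z = z ∧ actR tm z = z := by
  refine ⟨fun h => ⟨h im, h jm, h tm⟩, fun ⟨him, hjm, htm⟩ g => ?_⟩
  obtain ⟨a, b, c, h⟩ := exists_rep_eq g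
  rw [← substR_rep, h, substR_mul, substR_mul, AlgHom.comp_apply, AlgHom.comp_apply,
    substR_pow_apply him, substR_pow_apply hjm, substR_pow_apply htm]

/-! ### The generators are invariant -/

theorem actS_im_X (s : Fin 3) : actS im (X s) = (![1, -1, -1] s : F3) • X s := by
  rw [actS_im_eq, aeval_X]

theorem actS_jm_X (s : Fin 3) : actS jm (X s) = (![-1, -1, 1] s : F3) • X s := by
  rw [actS_jm_eq, aeval_X]

theorem gens_mem_RG (i : Fin 14) : gens i ∈ RG := by
  have h1 : yy 1 * yy 2 * yy 0 = y123 := by simpa [mul_assoc] using y123_eq 1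
  have h3 : ∀ p : S3, (-p) ^ 3 = -p ^ 3 := Odd.neg_pow (by decide)
  have h4 : ∀ p : S3, (-p) ^ 4 = p ^ 4 := Even.neg_pow (by decide)
  refine mem_RG_iff.2 ⟨?_, ?_, ?_⟩
  · fin_cases i <;> simp [gens, a1, a2, a3, bP, c1, c2, c3, c4, c5, c6, d1, d2, d3, y123, actR,
      map_repL_yy, Fin.sum_univ_three, rep_im, actS_im_X, tmul_neg, neg_tmul, h3, h4]
  · fin_cases i <;> simp [gens, a1, a2, a3, bP, c1, c2, c3, c4, c5, c6, d1, d2, d3, y123, actR,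
      map_repL_yy, Fin.sum_univ_three, rep_jm, actS_jm_X, tmul_neg, neg_tmul, h3, h4]
  · fin_cases i <;> simp [gens, a1, a2, a3, bP, c1, c2, c3, c4, c5, c6, d1, d2, d3, y123, actR,
      map_repL_yy, Fin.sum_univ_three, rep_tm, actS_tm_X, h1]
    all_goals first
      | exact (add_rotate _ _ _).symm
      | exact congrArg (· ⊗ₜ[F3] (1 : Lam)) (by ring)

/-! ### Invariant forms lie in the subalgebra generated by `gens` -/

/-- The `1`-form with coefficients `f`. -/
noncomputable def oneForm : (Fin 3 → S3) →ₗ[S3] Rf :=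
  Fintype.linearCombination S3 fun s => (1 : S3) ⊗ₜ[F3] yy s

/-- The `2`-form whose coefficient at `y_{s+1} y_{s+2}` is `f s`. -/
noncomputable def twoForm : (Fin 3 → S3) →ₗ[S3] Rf :=
  Fintype.linearCombination S3 fun s => (1 : S3) ⊗ₜ[F3] (yy (s + 1) * yy (s + 2))

theorem oneForm_apply (f : Fin 3 → S3) :
    oneForm f = f 0 ⊗ₜ[F3] yy 0 + f 1 ⊗ₜ[F3] yy 1 + f 2 ⊗ₜ[F3] yy 2 := by
  simp [oneForm, Fintype.linearCombination_apply, Fin.sum_univ_three, smul_tmul']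

theorem twoForm_apply (f : Fin 3 → S3) :
    twoForm f = f 0 ⊗ₜ[F3] (yy 1 * yy 2) + f 1 ⊗ₜ[F3] (yy 2 * yy 0) +
      f 2 ⊗ₜ[F3] (yy 0 * yy 1) := by
  simp [twoForm, Fintype.linearCombination_apply, Fin.sum_univ_three, smul_tmul']

theorem oneForm_mul_oneForm (f g : Fin 3 → S3) : oneForm f * oneForm g =
    twoForm fun s => f (s + 1) * g (s + 2) - f (s + 2) * g (s + 1) := by
  simp only [oneForm_apply, twoForm_apply, add_mul, mul_add, Algebra.TensorProduct.tmul_mul_tmul,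
    yy_mul_self, tmul_zero, yy_mul_yy_swap 1 0, yy_mul_yy_swap 2 1, yy_mul_yy_swap 0 2, tmul_neg,
    sub_tmul, zero_add, Fin.isValue, Fin.reduceAdd]
  abel

theorem tmul_one_mem {a : S3} (ha : a ∈ Algebra.adjoin F3 {a1, a2, a3, bP}) :
    a ⊗ₜ[F3] (1 : Lam) ∈ Algebra.adjoin F3 (Set.range gens) := by
  have h : Algebra.adjoin F3 {a1, a2, a3, bP} ≤ (Algebra.adjoin F3 (Set.range gens)).comap
      (Algebra.TensorProduct.includeLeft : S3 →ₐ[F3] Rf) := by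
    refine Algebra.adjoin_le ?_
    rintro _ (rfl | rfl | rfl | rfl)
    exacts [Algebra.subset_adjoin ⟨0, rfl⟩, Algebra.subset_adjoin ⟨1, rfl⟩,
      Algebra.subset_adjoin ⟨2, rfl⟩, Algebra.subset_adjoin ⟨3, rfl⟩]
  exact h ha

theorem smul_mem_adjoin_gens {a : S3} (ha : a ∈ Algebra.adjoin F3 {a1, a2, a3, bP}) {z : Rf}
    (hz : z ∈ Algebra.adjoin F3 (Set.range gens)) : a • z ∈ Algebra.adjoin F3 (Set.range gens) := by
  rw [← smul_one_mul, Algebra.TensorProduct.one_def, smul_tmul', smul_eq_mul, mul_one]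
  exact mul_mem (tmul_one_mem ha) hz

theorem primaryInv_le : primaryInv ≤ Algebra.adjoin F3 {a1, a2, a3, bP} :=
  Algebra.adjoin_mono (by grind)

/-- The coefficient vector `(f, t f, t² f)`. -/
noncomputable def orbitVec (f : S3) : Fin 3 → S3 := ![f, actS tm f, actS tm (actS tm f)]

theorem orbitVec_add (f g : S3) : orbitVec (f + g) = orbitVec f + orbitVec g := by
  simp [orbitVec]

theorem orbitVec_smul (a : primaryInv) (f : S3) : orbitVec (a • f) = (a : S3) • orbitVec f := by
  simp [orbitVec, Subalgebra.smul_def, actS_tm_of_mem_primaryInv a.2]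

theorem map_orbitVec_mem {F : (Fin 3 → S3) →ₗ[S3] Rf}
    (h : ∀ i, F (orbitVec (relGen i)) ∈ Algebra.adjoin F3 (Set.range gens)) {f : S3}
    (hf : f ∈ Submodule.span primaryInv (Set.range relGen)) :
    F (orbitVec f) ∈ Algebra.adjoin F3 (Set.range gens) := by
  induction hf using Submodule.span_induction with
  | mem x hx => obtain ⟨i, rfl⟩ := hx; exact h i
  | zero =>
    rw [show orbitVec 0 = 0 by simpa using orbitVec_smul 0 0, map_zero]
    exact zero_mem _
  | add x y _ _ hx hy => rw [orbitVec_add, map_add]; exact add_mem hx hy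
  | smul a x _ hx =>
    rw [orbitVec_smul, map_smul]
    exact smul_mem_adjoin_gens (primaryInv_le a.2) hx

theorem orbitVec_relGen (i : Fin 6) : orbitVec (relGen i) = ![
    ![X 0, X 1, X 2],
    ![X 1 * X 2, X 2 * X 0, X 0 * X 1],
    ![X 0 ^ 3, X 1 ^ 3, X 2 ^ 3],
    ![X 0 * X 1 ^ 2, X 1 * X 2 ^ 2, X 2 * X 0 ^ 2],
    ![X 1 ^ 3 * X 2, X 2 ^ 3 * X 0, X 0 ^ 3 * X 1],
    ![X 0 ^ 3 * X 1 ^ 2, X 1 ^ 3 * X 2 ^ 2, X 2 ^ 3 * X 0 ^ 2]] i := by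
  fin_cases i <;> simp [orbitVec, relGen, actS_tm_X]

theorem oneForm_orbitVec_relGen (i : Fin 6) :
    oneForm (orbitVec (relGen i)) = ![c1, c2, c3, c4, c5, c6] i := by
  rw [orbitVec_relGen]
  fin_cases i <;> exact oneForm_apply _

theorem twoForm_orbitVec_relGen (i : Fin 6) :
    twoForm (orbitVec (relGen i)) = ![d1, d2, d3, d4, d5, d6] i := by
  rw [orbitVec_relGen]
  fin_cases i <;> exact twoForm_apply _

theorem d4_eq : d4 = -(a1 • d1) + d3 - c1 * c2 := by
  have hc := oneForm_orbitVec_relGen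
  have hd := twoForm_orbitVec_relGen
  rw [show d1 = _ from (hd 0).symm, show d3 = _ from (hd 2).symm, show d4 = _ from (hd 3).symm,
    show c1 = _ from (hc 0).symm, show c2 = _ from (hc 1).symm]
  rw [oneForm_mul_oneForm, ← map_smul, ← map_neg, ← map_add, ← map_sub]
  congr 1
  funext s
  fin_cases s <;> simp [orbitVec_relGen, a1]
  · linear_combination X 0 * X 1 ^ 2 * three_eq_zero
  · linear_combination X 1 * X 2 ^ 2 * three_eq_zero
  · linear_combination X 2 * X 0 ^ 2 * three_eq_zero

theorem d5_eq : d5 = a2 • d1 - a1 • d2 + c1 * c3 := by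
  have hc := oneForm_orbitVec_relGen
  have hd := twoForm_orbitVec_relGen
  rw [show d1 = _ from (hd 0).symm, show d2 = _ from (hd 1).symm, show d5 = _ from (hd 4).symm,
    show c1 = _ from (hc 0).symm, show c3 = _ from (hc 2).symm]
  rw [oneForm_mul_oneForm, ← map_smul, ← map_smul, ← map_sub, ← map_add]
  congr 1
  funext s
  fin_cases s <;> simp [orbitVec_relGen, a1, a2]
  · linear_combination X 1 ^ 3 * X 2 * three_eq_zero
  · linear_combination X 2 ^ 3 * X 0 * three_eq_zero
  · linear_combination X 0 ^ 3 * X 1 * three_eq_zero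

theorem d6_eq : d6 = a2 • d2 - (a3 + a1 ^ 2) • d1 - a1 • d3 + a1 • d4 - c2 * c3 := by
  have hc := oneForm_orbitVec_relGen
  have hd := twoForm_orbitVec_relGen
  rw [show d1 = _ from (hd 0).symm, show d2 = _ from (hd 1).symm, show d3 = _ from (hd 2).symm,
    show d4 = _ from (hd 3).symm, show d6 = _ from (hd 5).symm,
    show c2 = _ from (hc 1).symm, show c3 = _ from (hc 2).symm]
  rw [oneForm_mul_oneForm, ← map_smul, ← map_smul, ← map_smul, ← map_smul, ← map_sub, ← map_sub,
    ← map_add, ← map_sub]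
  congr 1
  funext s
  fin_cases s <;> simp [orbitVec_relGen, a1, a2, a3]
  · linear_combination (X 0 ^ 3 * X 1 ^ 2 + X 0 ^ 5 + X 0 * X 2 ^ 4 + X 0 ^ 3 * X 2 ^ 2) *
      three_eq_zero
  · linear_combination (X 1 ^ 3 * X 2 ^ 2 + X 1 ^ 5 + X 1 * X 0 ^ 4 + X 1 ^ 3 * X 0 ^ 2) *
      three_eq_zero
  · linear_combination (X 2 ^ 3 * X 0 ^ 2 + X 2 ^ 5 + X 2 * X 1 ^ 4 + X 2 ^ 3 * X 1 ^ 2) *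
      three_eq_zero

theorem oneForm_orbitVec_mem (i : Fin 6) :
    oneForm (orbitVec (relGen i)) ∈ Algebra.adjoin F3 (Set.range gens) := by
  rw [oneForm_orbitVec_relGen]
  fin_cases i
  exacts [Algebra.subset_adjoin ⟨4, rfl⟩, Algebra.subset_adjoin ⟨5, rfl⟩,
    Algebra.subset_adjoin ⟨6, rfl⟩, Algebra.subset_adjoin ⟨7, rfl⟩,
    Algebra.subset_adjoin ⟨8, rfl⟩, Algebra.subset_adjoin ⟨9, rfl⟩]

theorem twoForm_orbitVec_mem (i : Fin 6) :
    twoForm (orbitVec (relGen i)) ∈ Algebra.adjoin F3 (Set.range gens) := by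
  have hc1 : c1 ∈ Algebra.adjoin F3 (Set.range gens) := Algebra.subset_adjoin ⟨4, rfl⟩
  have hc2 : c2 ∈ Algebra.adjoin F3 (Set.range gens) := Algebra.subset_adjoin ⟨5, rfl⟩
  have hc3 : c3 ∈ Algebra.adjoin F3 (Set.range gens) := Algebra.subset_adjoin ⟨6, rfl⟩
  have hd1 : d1 ∈ Algebra.adjoin F3 (Set.range gens) := Algebra.subset_adjoin ⟨10, rfl⟩
  have hd2 : d2 ∈ Algebra.adjoin F3 (Set.range gens) := Algebra.subset_adjoin ⟨11, rfl⟩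
  have hd3 : d3 ∈ Algebra.adjoin F3 (Set.range gens) := Algebra.subset_adjoin ⟨12, rfl⟩
  have ha1 : a1 ∈ Algebra.adjoin F3 {a1, a2, a3, bP} := Algebra.subset_adjoin (by simp)
  have ha2 : a2 ∈ Algebra.adjoin F3 {a1, a2, a3, bP} := Algebra.subset_adjoin (by simp)
  have ha3 : a3 ∈ Algebra.adjoin F3 {a1, a2, a3, bP} := Algebra.subset_adjoin (by simp)
  have hd4 : d4 ∈ Algebra.adjoin F3 (Set.range gens) := by
    rw [d4_eq]
    exact sub_mem (add_mem (neg_mem (smul_mem_adjoin_gens ha1 hd1)) hd3) (mul_mem hc1 hc2)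
  rw [twoForm_orbitVec_relGen]
  fin_cases i
  · exact hd1
  · exact hd2
  · exact hd3
  · exact hd4
  · change d5 ∈ _
    rw [d5_eq]
    exact add_mem (sub_mem (smul_mem_adjoin_gens ha2 hd1) (smul_mem_adjoin_gens ha1 hd2))
      (mul_mem hc1 hc3)
  · change d6 ∈ _
    rw [d6_eq]
    exact sub_mem (add_mem (sub_mem (sub_mem (smul_mem_adjoin_gens ha2 hd2)
      (smul_mem_adjoin_gens (add_mem ha3 (pow_mem ha1 2)) hd1)) (smul_mem_adjoin_gens ha1 hd3))
      (smul_mem_adjoin_gens ha1 hd4)) (mul_mem hc2 hc3)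

theorem formOf_mem_adjoin_gens {f : Fin 8 → S3} (h : formOf f ∈ RG) :
    formOf f ∈ Algebra.adjoin F3 (Set.range gens) := by
  obtain ⟨him, hjm, htm⟩ := mem_RG_iff.1 h
  rw [actR_im_formOf] at him
  rw [actR_jm_formOf] at hjm
  rw [actR_tm_formOf] at htm
  have hi := congrFun (formOf_injective him)
  have hj := congrFun (formOf_injective hjm)
  have ht := congrFun (formOf_injective htm)
  have hi0 := hi 0
  have hi1 := hi 1
  have hi4 := hi 4
  have hi7 := hi 7
  have hj0 := hj 0
  have hj1 := hj 1
  have hj4 := hj 4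
  have hj7 := hj 7
  have ht0 := ht 0
  have ht2 := ht 2
  have ht3 := ht 3
  have ht5 := ht 5
  have ht6 := ht 6
  have ht7 := ht 7
  simp [neg_eq_iff_eq_neg] at hi0 hi1 hi4 hi7 hj0 hj1 hj4 hj7 ht0 ht2 ht3 ht5 ht6 ht7
  have hf : formOf f = f 0 ⊗ₜ[F3] (1 : Lam) + oneForm (orbitVec (f 1)) +
      twoForm (orbitVec (f 4)) + f 7 ⊗ₜ[F3] (1 : Lam) * (1 : S3) ⊗ₜ[F3] y123 := by
    simp [formOf, Fin.sum_univ_eight, lamVec, oneForm_apply, twoForm_apply, orbitVec, ht2, ht3,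
      ht5, ht6, add_assoc]
  rw [hf]
  exact add_mem (add_mem (add_mem (tmul_one_mem (mem_adjoin_of_invariant hi0 hj0 ht0))
    (map_orbitVec_mem oneForm_orbitVec_mem (mem_span_relGen hi1 hj1)))
    (map_orbitVec_mem twoForm_orbitVec_mem (mem_span_relGen hi4 hj4)))
    (mul_mem (tmul_one_mem (mem_adjoin_of_invariant hi7 hj7 ht7))
      (Algebra.subset_adjoin ⟨13, rfl⟩))

/-- `R^G` equals the `𝔽₃`-subalgebra of `R` generated by
`{a₁, a₂, a₃, b, c₁, c₂, c₃, c₄, c₅, c₆, d₁, d₂, d₃, y₁y₂y₃}`. -/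
theorem stmt14 : Algebra.adjoin F3 (Set.range gens) = RG := by
  refine le_antisymm (Algebra.adjoin_le ?_) fun z hz => ?_
  · rintro _ ⟨i, rfl⟩
    exact gens_mem_RG i
  · obtain ⟨f, rfl⟩ := exists_formOf_eq z
    exact formOf_mem_adjoin_gens hz
end

section
/- The generating set {a₁, a₂, a₃, b, c₁, c₂, c₃, c₄, c₅, c₆, d₁, d₂, d₃, y₁y₂y₃} of R^G is minimal: for every element z of this fourteen-element set, z does not belong to the 𝔽₃-subalgebra of R generated by the remaining thirteen elements. -/
open Matrix MvPolynomial

set_option synthInstance.maxHeartbeats 1000000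
set_option maxHeartbeats 1000000

open TensorProduct

/-- A subspace containing `1` and stable under left multiplication by the elements of `s`
contains the subalgebra generated by `s`. -/
theorem mem_of_mem_adjoin {K A : Type*} [CommSemiring K] [Semiring A] [Algebra K A]
    {s : Set A} (W : Submodule K A) (one_mem : 1 ∈ W) (mul_mem : ∀ x ∈ s, ∀ w ∈ W, x * w ∈ W)
    {z : A} (hz : z ∈ Algebra.adjoin K s) : z ∈ W := by
  suffices h : ∀ w ∈ W, z * w ∈ W by simpa using h 1 one_mem
  induction hz using Algebra.adjoin_induction with
  | mem x hx => exact mul_mem x hx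
  | algebraMap r =>
    intro w hw
    rw [← Algebra.smul_def]
    exact W.smul_mem r hw
  | add x y _ _ hx hy =>
    intro w hw
    rw [add_mul]
    exact W.add_mem (hx w hw) (hy w hw)
  | mul x y _ _ hx hy =>
    intro w hw
    rw [mul_assoc]
    exact hx _ (hy w hw)

/-- The matrix of left multiplication by `v₁ y₂ + v₂ y₃` on the free `S`-module with basis
`1, y₂, y₃, y₂y₃` (zero-based coordinates of `v`). -/
noncomputable def wedgeMatrix : (Fin 3 → F3) →ₗ[F3] Matrix (Fin 4) (Fin 4) S3 where
  toFun v := !![0, 0, 0, 0; C (v 1), 0, 0, 0; C (v 2), 0, 0, 0; 0, -C (v 2), C (v 1), 0]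
  map_add' u v := by
    ext i j : 2
    fin_cases i <;> fin_cases j <;> simp [add_comm]
  map_smul' r v := by
    ext i j : 2
    fin_cases i <;> fin_cases j <;> simp [MvPolynomial.smul_eq_C_mul]

theorem wedgeMatrix_mul_self (v : Fin 3 → F3) : wedgeMatrix v * wedgeMatrix v = 0 := by
  ext i j : 2
  fin_cases i <;> fin_cases j <;>
    simp [wedgeMatrix, Matrix.mul_apply, Fin.sum_univ_four, mul_comm]

/-- The action of `R` on the quotient `R / (y₁)`, a free `S`-module with basis
`1, y₂, y₃, y₂y₃`. -/
noncomputable def wedgeRep : Rf →ₐ[F3] Matrix (Fin 4) (Fin 4) S3 :=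
  Algebra.TensorProduct.lift (Algebra.ofId S3 (Matrix (Fin 4) (Fin 4) S3) |>.restrictScalars F3)
    (ExteriorAlgebra.lift F3 ⟨wedgeMatrix, wedgeMatrix_mul_self⟩)
    fun p _ => Algebra.commutes p _

theorem wedgeRep_tmul (p : S3) (u : Lam) :
    wedgeRep (p ⊗ₜ[F3] u) = algebraMap S3 _ p *
      ExteriorAlgebra.lift F3 ⟨wedgeMatrix, wedgeMatrix_mul_self⟩ u := by
  exact Algebra.TensorProduct.lift_tmul _ _ _ _ _

theorem wedgeRep_tmul_one_mulVec (p : S3) (w : Fin 4 → S3) :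
    wedgeRep (p ⊗ₜ[F3] (1 : Lam)) *ᵥ w = ![p * w 0, p * w 1, p * w 2, p * w 3] := by
  have h : wedgeRep (p ⊗ₜ[F3] (1 : Lam)) = algebraMap S3 _ p := by
    rw [wedgeRep_tmul, map_one, mul_one]
  rw [h, Matrix.algebraMap_eq_diagonal]
  ext i : 1
  fin_cases i <;> simp [Matrix.mulVec_diagonal]

theorem wedgeRep_yy_mulVec (s : Fin 3) (w : Fin 4 → S3) :
    wedgeRep ((1 : S3) ⊗ₜ[F3] yy s) *ᵥ w =
      ![0, C ((Pi.single s 1 : Fin 3 → F3) 1) * w 0, C ((Pi.single s 1 : Fin 3 → F3) 2) * w 0,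
        C ((Pi.single s 1 : Fin 3 → F3) 1) * w 2 - C ((Pi.single s 1 : Fin 3 → F3) 2) * w 1] := by
  have h : wedgeRep ((1 : S3) ⊗ₜ[F3] yy s) = wedgeMatrix (Pi.single s 1) := by
    simp [wedgeRep_tmul, yy]
  rw [h]
  ext i : 1
  fin_cases i <;> simp [wedgeMatrix, Matrix.mulVec, dotProduct, Fin.sum_univ_four]
  ring

theorem wedgeRep_tmul_yy_mulVec (p : S3) (s : Fin 3) (w : Fin 4 → S3) :
    wedgeRep (p ⊗ₜ[F3] yy s) *ᵥ w =
      ![0, p * (C ((Pi.single s 1 : Fin 3 → F3) 1) * w 0),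
        p * (C ((Pi.single s 1 : Fin 3 → F3) 2) * w 0),
        p * (C ((Pi.single s 1 : Fin 3 → F3) 1) * w 2 -
          C ((Pi.single s 1 : Fin 3 → F3) 2) * w 1)] := by
  have h : p ⊗ₜ[F3] yy s = (p ⊗ₜ[F3] (1 : Lam)) * ((1 : S3) ⊗ₜ[F3] yy s) := by simp
  rw [h, map_mul, ← Matrix.mulVec_mulVec, wedgeRep_yy_mulVec, wedgeRep_tmul_one_mulVec]
  simp

theorem wedgeRep_tmul_yy_mul_mulVec (p : S3) (s : Fin 3) (u : Lam) (w : Fin 4 → S3) :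
    wedgeRep (p ⊗ₜ[F3] (yy s * u)) *ᵥ w =
      wedgeRep (p ⊗ₜ[F3] yy s) *ᵥ (wedgeRep ((1 : S3) ⊗ₜ[F3] u) *ᵥ w) := by
  rw [Matrix.mulVec_mulVec, ← map_mul, Algebra.TensorProduct.tmul_mul_tmul, mul_one]

/-- The polynomial parts of the generators. -/
noncomputable def coeffOne : Fin 14 → S3 := ![a1, a2, a3, bP, 0, 0, 0, 0, 0, 0, 0, 0, 0, 0]

/-- The coefficients of `y₂` in the generators. -/
noncomputable def coeffY₂ : Fin 14 → S3 :=
  ![0, 0, 0, 0, X 1, X 2 * X 0, X 1 ^ 3, X 1 * X 2 ^ 2, X 2 ^ 3 * X 0, X 1 ^ 3 * X 2 ^ 2,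
    0, 0, 0, 0]

/-- The coefficients of `y₃` in the generators. -/
noncomputable def coeffY₃ : Fin 14 → S3 :=
  ![0, 0, 0, 0, X 2, X 0 * X 1, X 2 ^ 3, X 2 * X 0 ^ 2, X 0 ^ 3 * X 1, X 2 ^ 3 * X 0 ^ 2,
    0, 0, 0, 0]

/-- The coefficients of `y₂y₃` in the generators. -/
noncomputable def coeffY₂Y₃ : Fin 14 → S3 :=
  ![0, 0, 0, 0, 0, 0, 0, 0, 0, 0, X 0, X 1 * X 2, X 0 ^ 3, 0]

theorem wedgeRep_gens_mulVec (j : Fin 14) (w : Fin 4 → S3) :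
    wedgeRep (gens j) *ᵥ w =
      ![coeffOne j * w 0,
        coeffOne j * w 1 + coeffY₂ j * w 0,
        coeffOne j * w 2 + coeffY₃ j * w 0,
        coeffOne j * w 3 + coeffY₂ j * w 2 - coeffY₃ j * w 1 + coeffY₂Y₃ j * w 0] := by
  fin_cases j <;>
    simp [gens, coeffOne, coeffY₂, coeffY₃, coeffY₂Y₃, c1, c2, c3, c4, c5, c6, d1, d2, d3, y123,
      Matrix.add_mulVec, wedgeRep_tmul_one_mulVec, wedgeRep_tmul_yy_mulVec, mul_assoc,
      wedgeRep_tmul_yy_mul_mulVec] <;> ring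

/-- The coefficients of a form modulo `y₁` in the basis `1, y₂, y₃, y₂y₃`. -/
noncomputable def components : Rf →ₗ[F3] (Fin 4 → S3) where
  toFun z := wedgeRep z *ᵥ ![1, 0, 0, 0]
  map_add' x y := by rw [map_add, Matrix.add_mulVec]
  map_smul' r x := by rw [map_smul, Matrix.smul_mulVec, RingHom.id_apply]

theorem components_one : components 1 = ![1, 0, 0, 0] := by
  simp [components]

theorem components_gens_mul (j : Fin 14) (z : Rf) :
    components (gens j * z) =
      ![coeffOne j * components z 0,
        coeffOne j * components z 1 + coeffY₂ j * components z 0,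
        coeffOne j * components z 2 + coeffY₃ j * components z 0,
        coeffOne j * components z 3 + coeffY₂ j * components z 2 - coeffY₃ j * components z 1 +
          coeffY₂Y₃ j * components z 0] := by
  rw [← wedgeRep_gens_mulVec]
  simp [components, Matrix.mulVec_mulVec]

theorem components_gens (j : Fin 14) :
    components (gens j) = ![coeffOne j, coeffY₂ j, coeffY₃ j, coeffY₂Y₃ j] := by
  simpa [components_one] using components_gens_mul j 1

theorem gens_notMem_of_coeffOne {i : Fin 14} (φ : S3 →ₗ[F3] F3) (h_one : φ 1 = 0)
    (h_mul : ∀ j ≠ i, ∀ f, φ (coeffOne j * f) = 0) (h_ne : φ (coeffOne i) ≠ 0) :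
    gens i ∉ Algebra.adjoin F3 {x : Rf | ∃ j : Fin 14, j ≠ i ∧ x = gens j} := by
  intro hi
  let W : Submodule F3 Rf :=
    LinearMap.ker (φ ∘ₗ LinearMap.proj 0 ∘ₗ components)
  have hW : ∀ z, z ∈ W ↔ φ (components z 0) = 0 := fun z => Iff.rfl
  refine h_ne ?_
  have := mem_of_mem_adjoin W ?_ ?_ hi
  · simpa [hW, components_gens] using this
  · simpa [hW, components_one] using h_one
  · rintro _ ⟨j, hj, rfl⟩ w -
    simpa [hW, components_gens_mul] using h_mul j hj _

theorem gens_notMem_of_coeffY₂ {i : Fin 14} (φ : S3 →ₗ[F3] F3)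
    (h_mul : ∀ j f, φ (coeffOne j * f) = 0) (h_one : ∀ j ≠ i, φ (coeffY₂ j) = 0)
    (h_ne : φ (coeffY₂ i) ≠ 0) :
    gens i ∉ Algebra.adjoin F3 {x : Rf | ∃ j : Fin 14, j ≠ i ∧ x = gens j} := by
  intro hi
  let W : Submodule F3 Rf :=
    { carrier := {z | φ (components z 1) = 0 ∧ ∀ j ≠ i, φ (coeffY₂ j * components z 0) = 0}
      zero_mem' := by simp
      add_mem' := by
        rintro x y ⟨hx, hx₁⟩ ⟨hy, hy₁⟩
        refine ⟨by simp [hx, hy], fun j hj => ?_⟩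
        simp [mul_add, hx₁ j hj, hy₁ j hj]
      smul_mem' := by
        rintro r x ⟨hx, hx₁⟩
        refine ⟨by simp [hx], fun j hj => ?_⟩
        simp [hx₁ j hj] }
  have hW : ∀ z, z ∈ W ↔ φ (components z 1) = 0 ∧
    ∀ j ≠ i, φ (coeffY₂ j * components z 0) = 0 := fun z => Iff.rfl
  refine h_ne ?_
  have := mem_of_mem_adjoin W ?_ ?_ hi
  · simpa [components_gens] using ((hW _).1 this).1
  · simpa [hW, components_one] using h_one
  · rintro _ ⟨j, hj, rfl⟩ w hw
    obtain ⟨-, hw⟩ := (hW _).1 hw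
    refine (hW _).2 ⟨?_, fun k _ => ?_⟩
    · simp [components_gens_mul, h_mul, hw j hj]
    · simp [components_gens_mul, mul_left_comm (coeffY₂ k), h_mul]

theorem gens_notMem_of_coeffY₂Y₃ {i : Fin 14} (φ : S3 →ₗ[F3] F3)
    (h_mul : ∀ j f, φ (coeffOne j * f) = 0)
    (h_wedge : ∀ j k, φ (coeffY₂ j * coeffY₃ k - coeffY₃ j * coeffY₂ k) = 0)
    (h_one : ∀ j ≠ i, φ (coeffY₂Y₃ j) = 0) (h_ne : φ (coeffY₂Y₃ i) ≠ 0) :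
    gens i ∉ Algebra.adjoin F3 {x : Rf | ∃ j : Fin 14, j ≠ i ∧ x = gens j} := by
  intro hi
  let W : Submodule F3 Rf :=
    { carrier := {z | φ (components z 3) = 0 ∧
        (∀ j, φ (coeffY₂ j * components z 2 - coeffY₃ j * components z 1) = 0) ∧
        (∀ j k, φ ((coeffY₂ j * coeffY₃ k - coeffY₃ j * coeffY₂ k) * components z 0) = 0) ∧
        ∀ j ≠ i, φ (coeffY₂Y₃ j * components z 0) = 0}
      zero_mem' := by simp
      add_mem' := by
        rintro x y ⟨hx, hx₁, hx₂, hx₃⟩ ⟨hy, hy₁, hy₂, hy₃⟩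
        refine ⟨by simp [hx, hy], fun j => ?_, fun j k => ?_, fun j hj => ?_⟩
        · simpa [mul_add, add_sub_add_comm, -map_sub] using
            congrArg₂ (· + ·) (hx₁ j) (hy₁ j)
        · rw [map_add, Pi.add_apply, mul_add, map_add, hx₂, hy₂, add_zero]
        · simp [mul_add, hx₃ j hj, hy₃ j hj]
      smul_mem' := by
        rintro r x ⟨hx, hx₁, hx₂, hx₃⟩
        refine ⟨by simp [hx], fun j => ?_, fun j k => ?_, fun j hj => ?_⟩
        · rw [map_smul, Pi.smul_apply, Pi.smul_apply, mul_smul_comm, mul_smul_comm, ← smul_sub,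
            map_smul, hx₁, smul_zero]
        · rw [map_smul, Pi.smul_apply, mul_smul_comm, map_smul, hx₂, smul_zero]
        · simp [hx₃ j hj] }
  have hW : ∀ z, z ∈ W ↔ φ (components z 3) = 0 ∧
    (∀ j, φ (coeffY₂ j * components z 2 - coeffY₃ j * components z 1) = 0) ∧
    (∀ j k, φ ((coeffY₂ j * coeffY₃ k - coeffY₃ j * coeffY₂ k) * components z 0) = 0) ∧
    ∀ j ≠ i, φ (coeffY₂Y₃ j * components z 0) = 0 := fun z => Iff.rfl
  refine h_ne ?_
  have := mem_of_mem_adjoin W ?_ ?_ hi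
  · simpa [components_gens] using ((hW _).1 this).1
  · refine (hW _).2 ⟨?_, ?_, ?_, ?_⟩ <;> simp only [components_one]
    · simp
    · simp
    · simpa using h_wedge
    · simpa using h_one
  · rintro _ ⟨l, hl, rfl⟩ w hw
    obtain ⟨-, hw₁, hw₂, hw₃⟩ := (hW _).1 hw
    refine (hW _).2 ⟨?_, fun j => ?_, fun j k => ?_, fun j _ => ?_⟩ <;>
      simp only [components_gens_mul, Matrix.cons_val]
    · rw [add_sub_assoc, map_add, map_add, h_mul, hw₁, hw₃ l hl, add_zero, add_zero]
    · have : coeffY₂ j * (coeffOne l * components w 2 + coeffY₃ l * components w 0) -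
          coeffY₃ j * (coeffOne l * components w 1 + coeffY₂ l * components w 0) =
          coeffOne l * (coeffY₂ j * components w 2 - coeffY₃ j * components w 1) +
          (coeffY₂ j * coeffY₃ l - coeffY₃ j * coeffY₂ l) * components w 0 := by ring
      rw [this, map_add, h_mul, hw₂, add_zero]
    · rw [mul_left_comm, h_mul]
    · rw [mul_left_comm, h_mul]

/-- The coefficient of `x₁ᵃ x₂ᵇ x₃ᶜ`. -/
noncomputable def coeff₃ (a b c : ℕ) : S3 →ₗ[F3] F3 :=
  MvPolynomial.lcoeff F3 (Finsupp.equivFunOnFinite.symm ![a, b, c])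

theorem coeff₃_X_mul (a b c : ℕ) (i : Fin 3) (f : S3) :
    coeff₃ a b c (X i * f) = if ![a, b, c] i = 0 then 0 else
      coeff₃ (a - if i = 0 then 1 else 0) (b - if i = 1 then 1 else 0)
        (c - if i = 2 then 1 else 0) f := by
  have h : Finsupp.equivFunOnFinite.symm ![a, b, c] - Finsupp.single i 1 =
      Finsupp.equivFunOnFinite.symm ![a - if i = 0 then 1 else 0, b - if i = 1 then 1 else 0,
        c - if i = 2 then 1 else 0] := by
    ext k
    fin_cases i <;> fin_cases k <;> simp
  simp [coeff₃, MvPolynomial.lcoeff, MvPolynomial.coeff_X_mul', h]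

theorem coeff₃_one (a b c : ℕ) :
    coeff₃ a b c 1 = if a = 0 ∧ b = 0 ∧ c = 0 then 1 else 0 := by
  have h : 0 = Finsupp.equivFunOnFinite.symm ![a, b, c] ↔ a = 0 ∧ b = 0 ∧ c = 0 := by
    rw [Finsupp.ext_iff]
    simp [Fin.forall_fin_succ, eq_comm]
  simp [coeff₃, MvPolynomial.lcoeff, MvPolynomial.coeff_one, h]

theorem coeff₃_X (a b c : ℕ) (i : Fin 3) :
    coeff₃ a b c (X i) = if ![a, b, c] i = 0 then 0 else
      coeff₃ (a - if i = 0 then 1 else 0) (b - if i = 1 then 1 else 0)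
        (c - if i = 2 then 1 else 0) 1 := by
  rw [← coeff₃_X_mul, mul_one]

/-- The polynomial `b` is not symmetric, unlike the other polynomial generators. -/
theorem gens_three_notMem :
    gens 3 ∉ Algebra.adjoin F3 {x : Rf | ∃ j : Fin 14, j ≠ 3 ∧ x = gens j} := by
  intro hi
  let σ : S3 →ₐ[F3] S3 := MvPolynomial.rename (Equiv.swap 0 1)
  let W : Submodule F3 Rf :=
    LinearMap.ker ((σ.toLinearMap - LinearMap.id) ∘ₗ LinearMap.proj 0 ∘ₗ components)
  have hW : ∀ z, z ∈ W ↔ σ (components z 0) = components z 0 := fun z => sub_eq_zero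
  have hσ₀ : σ (X 0) = X 1 := by simp [σ]
  have hσ₁ : σ (X 1) = X 0 := by simp [σ]
  have hσ₂ : σ (X 2) = X 2 := by
    simp [σ, Equiv.swap_apply_of_ne_of_ne (show (2 : Fin 3) ≠ 0 by decide)]
  have hb := mem_of_mem_adjoin W ?_ ?_ hi
  · rw [hW, components_gens] at hb
    have h := congrArg (coeff₃ 4 2 0) hb
    simp [coeffOne, bP, hσ₀, hσ₁, hσ₂, pow_succ, mul_assoc, coeff₃_X_mul, coeff₃_X,
      coeff₃_one] at h
  · simp [hW, components_one]
  · rintro _ ⟨j, hj, rfl⟩ w hw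
    rw [hW] at hw ⊢
    have : σ (coeffOne j) = coeffOne j := by
      fin_cases j <;> first
        | exact absurd rfl hj
        | simp [coeffOne, a1, a2, a3, hσ₀, hσ₁, hσ₂]
      all_goals ring
    simp [components_gens_mul, hw, this]

/-- The top form is a nonzero element of positive degree, so it is not a scalar. -/
theorem y123_notMem_bot : y123 ∉ (⊥ : Subalgebra F3 Lam) := by
  intro h
  obtain ⟨r, hr⟩ := Algebra.mem_bot.1 h
  let D : Lam →ₗ[F3] F3 := ExteriorAlgebra.liftAlternating
    (Pi.single 3 (Matrix.detRowAlternating (n := Fin 3) (R := F3)))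
  have h₁ : D y123 = 1 := by
    have : y123 = ExteriorAlgebra.ιMulti F3 3 (fun s : Fin 3 => Pi.single s (1 : F3)) := by
      simp [y123, yy, ExteriorAlgebra.ιMulti_apply, mul_assoc]
      rfl
    rw [this, ExteriorAlgebra.liftAlternating_apply_ιMulti, Pi.single_eq_same]
    decide +revert
  have h₂ : D (algebraMap F3 Lam r) = 0 := by
    simp [D, ExteriorAlgebra.liftAlternating_algebraMap]
  rw [← hr, h₂] at h₁
  exact zero_ne_one h₁

/-- Restriction of forms to the origin, `xᵢ ↦ 0`. -/
noncomputable def restrictZero : Rf →ₐ[F3] Lam :=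
  Algebra.TensorProduct.lift
    ((Algebra.ofId F3 Lam).comp (MvPolynomial.aeval (0 : Fin 3 → F3))) (AlgHom.id F3 Lam)
    fun p u => Algebra.commutes (MvPolynomial.aeval (0 : Fin 3 → F3) p) u

theorem restrictZero_tmul (p : S3) (u : Lam) :
    restrictZero (p ⊗ₜ[F3] u) =
      algebraMap F3 Lam (MvPolynomial.aeval (0 : Fin 3 → F3) p) * u := by
  exact Algebra.TensorProduct.lift_tmul _ _ _ _ _

theorem gens_thirteen_notMem :
    gens 13 ∉ Algebra.adjoin F3 {x : Rf | ∃ j : Fin 14, j ≠ 13 ∧ x = gens j} := by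
  intro hi
  have hle : Algebra.adjoin F3 {x : Rf | ∃ j : Fin 14, j ≠ 13 ∧ x = gens j} ≤
      (⊥ : Subalgebra F3 Lam).comap restrictZero := by
    refine Algebra.adjoin_le ?_
    rintro _ ⟨j, hj, rfl⟩
    have : restrictZero (gens j) = 0 := by
      fin_cases j <;> first
        | exact absurd rfl hj
        | simp [restrictZero_tmul, gens, a1, a2, a3, bP, c1, c2, c3, c4, c5, c6, d1, d2, d3]
    simp [this]
  refine y123_notMem_bot ?_
  simpa [restrictZero_tmul, gens] using hle hi

/-- The generating set `{a₁, a₂, a₃, b, c₁, …, c₆, d₁, d₂, d₃, y₁y₂y₃}` of `R^G` is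
minimal: none of the fourteen generators lies in the `𝔽₃`-subalgebra of `R` generated by
the remaining thirteen. -/
theorem stmt15 :
    ∀ i : Fin 14,
      gens i ∉ Algebra.adjoin F3 {x : Rf | ∃ j : Fin 14, j ≠ i ∧ x = gens j} := by
  intro i
  fin_cases i
  · refine gens_notMem_of_coeffOne (coeff₃ 2 0 0) ?_ (fun j hj f => ?_) ?_
    · simp [coeff₃_one]
    · fin_cases j <;> first
        | exact absurd rfl hj
        | simp [coeffOne, a1, a2, a3, bP, pow_succ, mul_assoc, add_mul, coeff₃_X_mul]
    · simp [coeffOne, a1, pow_succ, coeff₃_X_mul, coeff₃_X, coeff₃_one]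
  · refine gens_notMem_of_coeffOne (coeff₃ 1 1 1) ?_ (fun j hj f => ?_) ?_
    · simp [coeff₃_one]
    · fin_cases j <;> first
        | exact absurd rfl hj
        | simp [coeffOne, a1, a2, a3, bP, pow_succ, mul_assoc, add_mul, coeff₃_X_mul]
    · simp [coeffOne, a2, mul_assoc, coeff₃_X_mul, coeff₃_X, coeff₃_one]
  · refine gens_notMem_of_coeffOne (coeff₃ 4 0 0 - coeff₃ 2 2 0 + coeff₃ 0 4 0) ?_
      (fun j hj f => ?_) ?_
    · simp [coeff₃_one]
    · fin_cases j <;> first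
        | exact absurd rfl hj
        | simp [coeffOne, a1, a2, a3, bP, pow_succ, mul_assoc, add_mul, coeff₃_X_mul]
    · simp [coeffOne, a3, pow_succ, mul_assoc, coeff₃_X_mul, coeff₃_X, coeff₃_one]
      decide
  · exact gens_three_notMem
  · refine gens_notMem_of_coeffY₂ (coeff₃ 0 1 0)
      (fun j f => ?_) (fun j hj => ?_) ?_
    · fin_cases j <;>
        simp [coeffOne, a1, a2, a3, bP, pow_succ, mul_assoc, add_mul, coeff₃_X_mul]
    · fin_cases j <;> first
        | exact absurd rfl hj
        | simp [coeffY₂, pow_succ, mul_assoc, coeff₃_X_mul, coeff₃_X, coeff₃_one]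
    · simp [coeffY₂, pow_succ, mul_assoc, coeff₃_X_mul, coeff₃_X, coeff₃_one]
  · refine gens_notMem_of_coeffY₂ (coeff₃ 1 0 1)
      (fun j f => ?_) (fun j hj => ?_) ?_
    · fin_cases j <;>
        simp [coeffOne, a1, a2, a3, bP, pow_succ, mul_assoc, add_mul, coeff₃_X_mul]
    · fin_cases j <;> first
        | exact absurd rfl hj
        | simp [coeffY₂, pow_succ, mul_assoc, coeff₃_X_mul, coeff₃_X, coeff₃_one]
    · simp [coeffY₂, pow_succ, mul_assoc, coeff₃_X_mul, coeff₃_X, coeff₃_one]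
  · refine gens_notMem_of_coeffY₂ (coeff₃ 2 1 0 - coeff₃ 0 3 0)
      (fun j f => ?_) (fun j hj => ?_) ?_
    · fin_cases j <;>
        simp [coeffOne, a1, a2, a3, bP, pow_succ, mul_assoc, add_mul, coeff₃_X_mul]
    · fin_cases j <;> first
        | exact absurd rfl hj
        | simp [coeffY₂, pow_succ, mul_assoc, coeff₃_X_mul, coeff₃_X, coeff₃_one]
    · simp [coeffY₂, pow_succ, mul_assoc, coeff₃_X_mul, coeff₃_X, coeff₃_one]
  · refine gens_notMem_of_coeffY₂ (coeff₃ 0 1 2 - coeff₃ 2 1 0)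
      (fun j f => ?_) (fun j hj => ?_) ?_
    · fin_cases j <;>
        simp [coeffOne, a1, a2, a3, bP, pow_succ, mul_assoc, add_mul, coeff₃_X_mul]
    · fin_cases j <;> first
        | exact absurd rfl hj
        | simp [coeffY₂, pow_succ, mul_assoc, coeff₃_X_mul, coeff₃_X, coeff₃_one]
    · simp [coeffY₂, pow_succ, mul_assoc, coeff₃_X_mul, coeff₃_X, coeff₃_one]
  · refine gens_notMem_of_coeffY₂ (coeff₃ 1 0 3 - coeff₃ 3 0 1)
      (fun j f => ?_) (fun j hj => ?_) ?_
    · fin_cases j <;>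
        simp [coeffOne, a1, a2, a3, bP, pow_succ, mul_assoc, add_mul, coeff₃_X_mul]
    · fin_cases j <;> first
        | exact absurd rfl hj
        | simp [coeffY₂, pow_succ, mul_assoc, coeff₃_X_mul, coeff₃_X, coeff₃_one]
    · simp [coeffY₂, pow_succ, mul_assoc, coeff₃_X_mul, coeff₃_X, coeff₃_one]
  · refine gens_notMem_of_coeffY₂ (coeff₃ 0 3 2 - coeff₃ 2 3 0 - coeff₃ 0 1 4 + coeff₃ 4 1 0)
      (fun j f => ?_) (fun j hj => ?_) ?_
    · fin_cases j <;>
        simp [coeffOne, a1, a2, a3, bP, pow_succ, mul_assoc, add_mul, coeff₃_X_mul]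
      all_goals ring
    · fin_cases j <;> first
        | exact absurd rfl hj
        | simp [coeffY₂, pow_succ, mul_assoc, coeff₃_X_mul, coeff₃_X, coeff₃_one]
    · simp [coeffY₂, pow_succ, mul_assoc, coeff₃_X_mul, coeff₃_X, coeff₃_one]
  · refine gens_notMem_of_coeffY₂Y₃ (coeff₃ 1 0 0)
      (fun j f => ?_) (fun j k => ?_) (fun j hj => ?_) ?_
    · fin_cases j <;>
        simp [coeffOne, a1, a2, a3, bP, pow_succ, mul_assoc, add_mul, coeff₃_X_mul]
    · fin_cases j <;> fin_cases k <;>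
        simp [coeffY₂, coeffY₃, pow_succ, mul_assoc, coeff₃_X_mul, coeff₃_X, coeff₃_one]
    · fin_cases j <;> first
        | exact absurd rfl hj
        | simp [coeffY₂Y₃, pow_succ, mul_assoc, coeff₃_X_mul, coeff₃_X, coeff₃_one]
    · simp [coeffY₂Y₃, pow_succ, mul_assoc, coeff₃_X_mul, coeff₃_X, coeff₃_one]
  · refine gens_notMem_of_coeffY₂Y₃ (coeff₃ 0 1 1)
      (fun j f => ?_) (fun j k => ?_) (fun j hj => ?_) ?_
    · fin_cases j <;>
        simp [coeffOne, a1, a2, a3, bP, pow_succ, mul_assoc, add_mul, coeff₃_X_mul]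
    · fin_cases j <;> fin_cases k <;>
        simp [coeffY₂, coeffY₃, pow_succ, mul_assoc, coeff₃_X_mul, coeff₃_X, coeff₃_one]
    · fin_cases j <;> first
        | exact absurd rfl hj
        | simp [coeffY₂Y₃, pow_succ, mul_assoc, coeff₃_X_mul, coeff₃_X, coeff₃_one]
    · simp [coeffY₂Y₃, pow_succ, mul_assoc, coeff₃_X_mul, coeff₃_X, coeff₃_one]
  · refine gens_notMem_of_coeffY₂Y₃ (coeff₃ 3 0 0 + coeff₃ 1 2 0 + coeff₃ 1 0 2)
      (fun j f => ?_) (fun j k => ?_) (fun j hj => ?_) ?_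
    · fin_cases j <;>
        simp [coeffOne, a1, a2, a3, bP, pow_succ, mul_assoc, add_mul, coeff₃_X_mul]
      rw [← two_mul, ← add_one_mul, show (2 + 1 : F3) = 0 by decide, zero_mul]
    · fin_cases j <;> fin_cases k <;>
        simp [coeffY₂, coeffY₃, pow_succ, mul_assoc, coeff₃_X_mul, coeff₃_X, coeff₃_one]
    · fin_cases j <;> first
        | exact absurd rfl hj
        | simp [coeffY₂Y₃, pow_succ, mul_assoc, coeff₃_X_mul, coeff₃_X, coeff₃_one]
    · simp [coeffY₂Y₃, pow_succ, mul_assoc, coeff₃_X_mul, coeff₃_X, coeff₃_one]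
  · exact gens_thirteen_notMem
end
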